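/- arXiv:1612.07623 — 3 statements merged into one kernel-verified Lean document; each statement's English description precedes it below -/
import Mathlib

section
/- Let (X,d) be a proper geodesic metric space, φ : X → ℝ a Kantorovich potential, and x ∈ X. Suppose γ¹, γ² are φ-Kantorovich geodesics and t₁, t₂ ∈ (0,1) satisfy γ¹_{t₁} = γ²_{t₂} = x. Then ℓ(γ¹) = 0 if and only if ℓ(γ²) = 0; moreover, ℓ(γ¹) = 0 if and only if φ(x) + φ^c(x) = 0. In other words, all φ-Kantorovich geodesics having x as an interior point have either all strictly positive length or all zero length, according to whether φ(x) + φ^c(x) ≠ 0 or = 0. -/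
/-- `ψ` is pointwise the `c`-transform of `φ` for the cost `c = d²/2`:
at every point `x`, `ψ x` is a genuine (finite) infimum of `d(x,y)²/2 - φ(y)` over `y`. -/
def IsCTransform {X : Type*} [MetricSpace X] (φ ψ : X → ℝ) : Prop :=
  ∀ x : X, IsGLB {v : ℝ | ∃ y : X, v = dist x y ^ 2 / 2 - φ y} (ψ x)

/-- `φ` is a Kantorovich potential with (real-valued) conjugate potential `φc`. -/
def IsKantorovichPair {X : Type*} [MetricSpace X] (φ φc : X → ℝ) : Prop :=
  IsCTransform φ φc ∧ IsCTransform φc φ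

/-- A constant-speed geodesic parametrized on `[0,1]`. -/
def IsGeodesic {X : Type*} [MetricSpace X] (γ : ℝ → X) : Prop :=
  ∀ s ∈ Set.Icc (0:ℝ) 1, ∀ t ∈ Set.Icc (0:ℝ) 1,
    dist (γ s) (γ t) = |s - t| * dist (γ 0) (γ 1)

/-- A `φ`-Kantorovich geodesic: a geodesic with `φ(γ₀) + φ^c(γ₁) = ℓ(γ)²/2`,
where `ℓ(γ) = d(γ₀,γ₁)`. -/
def IsKantorovichGeodesic {X : Type*} [MetricSpace X] (φ φc : X → ℝ) (γ : ℝ → X) : Prop :=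
  IsGeodesic γ ∧ φ (γ 0) + φc (γ 1) = dist (γ 0) (γ 1) ^ 2 / 2

/-- A metric space is geodesic if every pair of points is joined by a geodesic. -/
def IsGeodesicSpace (X : Type*) [MetricSpace X] : Prop :=
  ∀ x y : X, ∃ γ : ℝ → X, IsGeodesic γ ∧ γ 0 = x ∧ γ 1 = y

/-- The interpolating intermediate-time Kantorovich potential
`φ_t(x) = -inf_y (d(x,y)²/(2t) - φ(y))` for `t ≠ 0`, and `φ_0 = φ`. -/
noncomputable def interpPotential {X : Type*} [MetricSpace X] (φ : X → ℝ) (t : ℝ) (x : X) : ℝ :=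
  if t = 0 then φ x
  else -sInf {v : ℝ | ∃ y : X, v = dist x y ^ 2 / (2 * t) - φ y}

/-- The time-reversed interpolating Kantorovich potential
`φ̄_t(x) = inf_y (d(x,y)²/(2(1-t)) - φ^c(y))` for `t ≠ 1`, and `φ̄_1 = -φ^c`. -/
noncomputable def reversePotential {X : Type*} [MetricSpace X] (φc : X → ℝ) (t : ℝ) (x : X) : ℝ :=
  if t = 1 then -φc x
  else sInf {v : ℝ | ∃ y : X, v = dist x y ^ 2 / (2 * (1 - t)) - φc y}

/-!
Subtract the contact equality `φ(γ₀) + ψ(γ₁) = ℓ²/2` from the sum of the duality inequalities at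
`(γ₀, γ_t)` and `(γ_t, γ₁)`. Since these pairs are at distance `tℓ` and `(1 - t)ℓ`, and
`t² + (1 - t)² - 1 = -2t(1 - t)`, this leaves `φ(γ_t) + ψ(γ_t) ≤ -t(1 - t)ℓ²`. So `φ + ψ` is
strictly negative at interior points of geodesics of positive length, while a geodesic of length
zero is constant and its contact equality reads `φ + ψ = 0`.
-/

/-- `(φ, ψ)` is a competitor in the dual Kantorovich problem for the cost `d²/2`. The inequality
is required at every pair of points, not only almost everywhere for some marginals. -/
def IsDualAdmissible {X : Type*} [MetricSpace X] (φ ψ : X → ℝ) : Prop :=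
  ∀ x y : X, φ x + ψ y ≤ dist x y ^ 2 / 2

section

variable {X : Type*} [MetricSpace X] {φ ψ : X → ℝ} {γ : ℝ → X} {s t : ℝ}

theorem IsCTransform.isDualAdmissible (h : IsCTransform φ ψ) : IsDualAdmissible φ ψ := by
  intro x y
  have hψ : ψ y ≤ dist y x ^ 2 / 2 - φ x := (h y).1 ⟨x, rfl⟩
  rw [dist_comm]
  linarith

namespace IsGeodesic

theorem dist_zero_left (hγ : IsGeodesic γ) (ht : t ∈ Set.Icc (0 : ℝ) 1) :
    dist (γ 0) (γ t) = t * dist (γ 0) (γ 1) := by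
  rw [hγ 0 (Set.left_mem_Icc.2 zero_le_one) t ht, zero_sub, abs_neg, abs_of_nonneg ht.1]

theorem dist_one_right (hγ : IsGeodesic γ) (ht : t ∈ Set.Icc (0 : ℝ) 1) :
    dist (γ t) (γ 1) = (1 - t) * dist (γ 0) (γ 1) := by
  rw [hγ t ht 1 (Set.right_mem_Icc.2 zero_le_one), abs_sub_comm, abs_of_nonneg (sub_nonneg.2 ht.2)]

theorem eq_of_dist_eq_zero (hγ : IsGeodesic γ) (hℓ : dist (γ 0) (γ 1) = 0)
    (hs : s ∈ Set.Icc (0 : ℝ) 1) (ht : t ∈ Set.Icc (0 : ℝ) 1) : γ s = γ t :=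
  dist_eq_zero.1 <| by rw [hγ s hs t ht, hℓ, mul_zero]

end IsGeodesic

namespace IsKantorovichGeodesic

theorem add_eq_zero_of_dist_eq_zero (hγ : IsKantorovichGeodesic φ ψ γ)
    (hℓ : dist (γ 0) (γ 1) = 0) (ht : t ∈ Set.Icc (0 : ℝ) 1) : φ (γ t) + ψ (γ t) = 0 := by
  obtain ⟨hgeod, hcontact⟩ := hγ
  have h₀ : γ 0 = γ t := hgeod.eq_of_dist_eq_zero hℓ (Set.left_mem_Icc.2 zero_le_one) ht
  have h₁ : γ 1 = γ t := hgeod.eq_of_dist_eq_zero hℓ (Set.right_mem_Icc.2 zero_le_one) ht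
  simpa [h₀, h₁] using hcontact

theorem add_le_neg_mul_dist_sq (hγ : IsKantorovichGeodesic φ ψ γ) (hadm : IsDualAdmissible φ ψ)
    (ht : t ∈ Set.Icc (0 : ℝ) 1) :
    φ (γ t) + ψ (γ t) ≤ -(t * (1 - t) * dist (γ 0) (γ 1) ^ 2) := by
  obtain ⟨hgeod, hcontact⟩ := hγ
  have hleft := hadm (γ 0) (γ t)
  have hright := hadm (γ t) (γ 1)
  rw [hgeod.dist_zero_left ht] at hleft
  rw [hgeod.dist_one_right ht] at hright
  linarith

theorem dist_eq_zero_iff (hγ : IsKantorovichGeodesic φ ψ γ) (hadm : IsDualAdmissible φ ψ)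
    (ht : t ∈ Set.Ioo (0 : ℝ) 1) :
    dist (γ 0) (γ 1) = 0 ↔ φ (γ t) + ψ (γ t) = 0 := by
  have ht' := Set.Ioo_subset_Icc_self ht
  refine ⟨fun hℓ ↦ hγ.add_eq_zero_of_dist_eq_zero hℓ ht', fun hzero ↦ ?_⟩
  have hbound : t * (1 - t) * dist (γ 0) (γ 1) ^ 2 ≤ 0 := by
    linarith [hγ.add_le_neg_mul_dist_sq hadm ht']
  have hpos : 0 < t * (1 - t) := mul_pos ht.1 (sub_pos.2 ht.2)
  exact sq_nonpos_iff _ |>.1 (nonpos_of_mul_nonpos_right hbound hpos)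

end IsKantorovichGeodesic

end

theorem statement5_general {X : Type*} [MetricSpace X] {φ ψ : X → ℝ}
    (hadm : IsDualAdmissible φ ψ) {x : X} {γ₁ γ₂ : ℝ → X} {t₁ t₂ : ℝ}
    (ht₁ : t₁ ∈ Set.Ioo (0 : ℝ) 1) (ht₂ : t₂ ∈ Set.Ioo (0 : ℝ) 1)
    (h₁ : IsKantorovichGeodesic φ ψ γ₁) (h₂ : IsKantorovichGeodesic φ ψ γ₂)
    (hx₁ : γ₁ t₁ = x) (hx₂ : γ₂ t₂ = x) :
    (dist (γ₁ 0) (γ₁ 1) = 0 ↔ dist (γ₂ 0) (γ₂ 1) = 0) ∧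
      (dist (γ₁ 0) (γ₁ 1) = 0 ↔ φ x + ψ x = 0) := by
  have hiff₁ : dist (γ₁ 0) (γ₁ 1) = 0 ↔ φ x + ψ x = 0 := hx₁ ▸ h₁.dist_eq_zero_iff hadm ht₁
  have hiff₂ : dist (γ₂ 0) (γ₂ 1) = 0 ↔ φ x + ψ x = 0 := hx₂ ▸ h₂.dist_eq_zero_iff hadm ht₂
  exact ⟨hiff₁.trans hiff₂.symm, hiff₁⟩

/-- On a proper geodesic space, if `γ¹_{t₁} = γ²_{t₂} = x` for `φ`-Kantorovich geodesics
`γ¹, γ²` and `t₁, t₂ ∈ (0,1)`, then `ℓ(γ¹) = 0 ↔ ℓ(γ²) = 0`, and moreover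
`ℓ(γ¹) = 0 ↔ φ(x) + φ^c(x) = 0`. -/
theorem statement5 {X : Type*} [MetricSpace X] [ProperSpace X]
    (hgeo : IsGeodesicSpace X) (φ φc : X → ℝ) (hpair : IsKantorovichPair φ φc)
    (x : X) (γ₁ γ₂ : ℝ → X) (t₁ t₂ : ℝ)
    (ht₁ : t₁ ∈ Set.Ioo (0:ℝ) 1) (ht₂ : t₂ ∈ Set.Ioo (0:ℝ) 1)
    (h₁ : IsKantorovichGeodesic φ φc γ₁) (h₂ : IsKantorovichGeodesic φ φc γ₂)
    (hx₁ : γ₁ t₁ = x) (hx₂ : γ₂ t₂ = x) :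
    (dist (γ₁ 0) (γ₁ 1) = 0 ↔ dist (γ₂ 0) (γ₂ 1) = 0) ∧
      (dist (γ₁ 0) (γ₁ 1) = 0 ↔ φ x + φc x = 0) :=
  statement5_general hpair.1.isDualAdmissible ht₁ ht₂ h₁ h₂ hx₁ hx₂
end

section
/- Let (X,d) be a proper geodesic metric space, φ : X → ℝ a Kantorovich potential, and γ a φ-Kantorovich geodesic with ℓ := ℓ(γ) > 0. Let 0 < s < t < 1 and ε ∈ ℝ be such that s+ε, t+ε ∈ (0,1), and define h(r) := 2·(φ_{r+ε}(γ_r) − φ_r(γ_r) − ε·ℓ²/2) for r ∈ {s,t}. Suppose y ∈ X attains the infimum defining φ_{s+ε}(γ_s), i.e. −φ_{s+ε}(γ_s) = d(γ_s,y)²/(2(s+ε)) − φ(y). Then (h(t) − h(s))/(t − s) ≥ ((s+ε)/(t+ε))·(d(γ_s,y)/(s+ε) − ℓ)². -/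
/-! Along a Kantorovich geodesic `φ_r(γ_r) = φ(γ_0) - r ℓ² / 2` for every `r ∈ [0,1]`:
`γ_0` is a competitor, and it is optimal because `φ(z) ≤ d(γ_1, z)² / 2 - φ^c(γ_1)` for all `z`,
with equality at `γ_0`, while convexity of the square gives
`d(γ_1, z)² ≤ (1 - r) ℓ² + d(γ_r, z)² / r`. Hence
`h(t) - h(s) = 2 (φ_{t+ε}(γ_t) - φ_{s+ε}(γ_s)) + (t - s) ℓ²`. The point `y` is optimal for
`φ_{s+ε}(γ_s)` and a competitor for `φ_{t+ε}(γ_t)`; bounding `d(γ_t, y)` by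
`(t - s) ℓ + d(γ_s, y)` reduces the claim to an identity of rational functions. -/

section

variable {X : Type*} [MetricSpace X] {φ φc : X → ℝ} {γ : ℝ → X} {s t : ℝ}

theorem IsCTransform.add_le (h : IsCTransform φ φc) (x y : X) :
    φ y + φc x ≤ dist x y ^ 2 / 2 := by
  linarith [(h x).1 ⟨y, rfl⟩]

theorem IsCTransform.bddBelow_div (h : IsCTransform φ φc) (ht₀ : 0 < t) (ht₁ : t ≤ 1) (x : X) :
    BddBelow {v : ℝ | ∃ y : X, v = dist x y ^ 2 / (2 * t) - φ y} := by
  refine ⟨φc x, ?_⟩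
  rintro _ ⟨y, rfl⟩
  have cost_le : dist x y ^ 2 / 2 ≤ dist x y ^ 2 / (2 * t) :=
    div_le_div_of_nonneg_left (sq_nonneg _) (by positivity) (by linarith)
  linarith [h.add_le x y]

theorem IsCTransform.sub_le_interpPotential (h : IsCTransform φ φc) (ht₀ : 0 < t) (ht₁ : t ≤ 1)
    (x y : X) : φ y - dist x y ^ 2 / (2 * t) ≤ interpPotential φ t x := by
  rw [interpPotential, if_neg ht₀.ne']
  linarith [csInf_le (h.bddBelow_div ht₀ ht₁ x) ⟨y, rfl⟩]

theorem interpPotential_le (ht : t ≠ 0) {x : X} {c : ℝ}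
    (hc : ∀ y, φ y - dist x y ^ 2 / (2 * t) ≤ c) : interpPotential φ t x ≤ c := by
  rw [interpPotential, if_neg ht]
  refine neg_le.mp (le_csInf ⟨_, x, rfl⟩ ?_)
  rintro _ ⟨y, rfl⟩
  linarith [hc y]

theorem IsGeodesic.dist_eq_of_le (hγ : IsGeodesic γ) (hs : 0 ≤ s) (hst : s ≤ t) (ht : t ≤ 1) :
    dist (γ s) (γ t) = (t - s) * dist (γ 0) (γ 1) := by
  rw [hγ s ⟨hs, hst.trans ht⟩ t ⟨hs.trans hst, ht⟩, abs_sub_comm, abs_of_nonneg (sub_nonneg.2 hst)]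

theorem sq_one_sub_mul_add_le (ht₀ : 0 < t) (ht₁ : t ≤ 1) (a b : ℝ) :
    ((1 - t) * a + b) ^ 2 ≤ (1 - t) * a ^ 2 + b ^ 2 / t := by
  have convexity := even_two.convexOn_pow.2 (Set.mem_univ a) (Set.mem_univ (b / t))
    (sub_nonneg.2 ht₁) ht₀.le (sub_add_cancel 1 t)
  have scaled_sq : t * (b / t) ^ 2 = b ^ 2 / t := by field_simp
  simpa only [smul_eq_mul, mul_div_cancel₀ b ht₀.ne', scaled_sq] using convexity

theorem IsKantorovichGeodesic.interpPotential_eq (hφ : IsCTransform φ φc)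
    (hγ : IsKantorovichGeodesic φ φc γ) (ht₀ : 0 ≤ t) (ht₁ : t ≤ 1) :
    interpPotential φ t (γ t) = φ (γ 0) - t * dist (γ 0) (γ 1) ^ 2 / 2 := by
  obtain ⟨geodesic, optimal⟩ := hγ
  obtain rfl | ht := ht₀.eq_or_lt
  · simp [interpPotential]
  apply le_antisymm
  · refine interpPotential_le ht.ne' fun y ↦ ?_
    have triangle : dist (γ 1) y ≤ (1 - t) * dist (γ 0) (γ 1) + dist (γ t) y := by
      rw [← geodesic.dist_eq_of_le ht₀ ht₁ le_rfl]
      exact dist_triangle_left _ _ _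
    have cost_le : dist (γ 1) y ^ 2 / 2
        ≤ ((1 - t) * dist (γ 0) (γ 1) ^ 2 + dist (γ t) y ^ 2 / t) / 2 := by
      gcongr
      exact (pow_le_pow_left₀ dist_nonneg triangle 2).trans (sq_one_sub_mul_add_le ht ht₁ _ _)
    rw [mul_comm 2 t, ← div_div]
    linarith [hφ.add_le (γ 1) y, optimal]
  · have dist_start : dist (γ t) (γ 0) = t * dist (γ 0) (γ 1) := by
      rw [dist_comm, geodesic.dist_eq_of_le le_rfl ht₀ ht₁, sub_zero]
    calc φ (γ 0) - t * dist (γ 0) (γ 1) ^ 2 / 2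
        = φ (γ 0) - dist (γ t) (γ 0) ^ 2 / (2 * t) := by
          rw [dist_start]
          field_simp
      _ ≤ interpPotential φ t (γ t) := hφ.sub_le_interpPotential ht ht₁ _ _

theorem IsCTransform.sub_le_interpPotential_sub (h : IsCTransform φ φc) (ht₀ : 0 < t) (ht₁ : t ≤ 1)
    {x y : X} (hy : -interpPotential φ s x = dist x y ^ 2 / (2 * s) - φ y) (z : X) :
    dist x y ^ 2 / (2 * s) - (dist x z + dist x y) ^ 2 / (2 * t)
      ≤ interpPotential φ t z - interpPotential φ s x := by
  have cost_le : dist z y ^ 2 / (2 * t) ≤ (dist x z + dist x y) ^ 2 / (2 * t) := by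
    gcongr
    exact dist_triangle_left _ _ _
  linarith [h.sub_le_interpPotential ht₀ ht₁ z y]

theorem sq_div_sub_sq_add_div (hs : s ≠ 0) (ht : t ≠ 0) (d l : ℝ) :
    d ^ 2 / (2 * s) - ((t - s) * l + d) ^ 2 / (2 * t)
      = (t - s) / 2 * (s / t * (d / s - l) ^ 2 - l ^ 2) := by
  field_simp
  ring

theorem statement10_general (hφ : IsCTransform φ φc) (hγ : IsKantorovichGeodesic φ φc γ) {ε : ℝ}
    (hs : 0 ≤ s) (hst : s < t) (ht : t ≤ 1) (hsε : 0 < s + ε) (htε : t + ε ≤ 1) {y : X}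
    (hy : -interpPotential φ (s + ε) (γ s) = dist (γ s) y ^ 2 / (2 * (s + ε)) - φ y) :
    (2 * (interpPotential φ (t + ε) (γ t) - interpPotential φ t (γ t)
            - ε * dist (γ 0) (γ 1) ^ 2 / 2)
        - 2 * (interpPotential φ (s + ε) (γ s) - interpPotential φ s (γ s)
            - ε * dist (γ 0) (γ 1) ^ 2 / 2)) / (t - s)
      ≥ (s + ε) / (t + ε) * (dist (γ s) y / (s + ε) - dist (γ 0) (γ 1)) ^ 2 := by
  have htε₀ : 0 < t + ε := by linarith
  have growth : (t - s) / 2 * ((s + ε) / (t + ε)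
        * (dist (γ s) y / (s + ε) - dist (γ 0) (γ 1)) ^ 2 - dist (γ 0) (γ 1) ^ 2)
      ≤ interpPotential φ (t + ε) (γ t) - interpPotential φ (s + ε) (γ s) := by
    rw [← add_sub_add_right_eq_sub t s ε, ← sq_div_sub_sq_add_div hsε.ne' htε₀.ne',
      add_sub_add_right_eq_sub, ← hγ.1.dist_eq_of_le hs hst.le ht]
    exact hφ.sub_le_interpPotential_sub htε₀ htε hy (γ t)
  rw [hγ.interpPotential_eq hφ hs (hst.le.trans ht),
    hγ.interpPotential_eq hφ (hs.trans hst.le) ht, ge_iff_le, le_div_iff₀ (sub_pos.2 hst)]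
  linarith

end

/-- Main third-order inequality: with `ℓ := ℓ(γ) > 0`,
`h(r) := 2(φ_{r+ε}(γ_r) - φ_r(γ_r) - ε·ℓ²/2)`, and `y` attaining the infimum defining
`φ_{s+ε}(γ_s)`, one has `(h(t)-h(s))/(t-s) ≥ ((s+ε)/(t+ε))·(d(γ_s,y)/(s+ε) - ℓ)²`. -/
theorem statement10 {X : Type*} [MetricSpace X] [ProperSpace X]
    (hgeo : IsGeodesicSpace X) (φ φc : X → ℝ) (hpair : IsKantorovichPair φ φc)
    (γ : ℝ → X) (hγ : IsKantorovichGeodesic φ φc γ)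
    (hl : 0 < dist (γ 0) (γ 1))
    (s t ε : ℝ) (hs : 0 < s) (hst : s < t) (ht : t < 1)
    (hsε : s + ε ∈ Set.Ioo (0:ℝ) 1) (htε : t + ε ∈ Set.Ioo (0:ℝ) 1)
    (y : X)
    (hy : -interpPotential φ (s + ε) (γ s)
        = dist (γ s) y ^ 2 / (2 * (s + ε)) - φ y) :
    (2 * (interpPotential φ (t + ε) (γ t) - interpPotential φ t (γ t)
            - ε * dist (γ 0) (γ 1) ^ 2 / 2)
        - 2 * (interpPotential φ (s + ε) (γ s) - interpPotential φ s (γ s)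
            - ε * dist (γ 0) (γ 1) ^ 2 / 2)) / (t - s)
      ≥ (s + ε) / (t + ε) *
          (dist (γ s) y / (s + ε) - dist (γ 0) (γ 1)) ^ 2 :=
  statement10_general hpair.1 hγ hs.le hst ht.le hsε.1 htε.2.le hy
end

section
/- (Change-of-Variables Rigidity.) Let K₀ ∈ ℝ and N ∈ (1,∞). Let ρ : (0,1) → ℝ be locally Lipschitz and strictly positive. Let z : (0,1) → ℝ be locally Lipschitz, and suppose that for every δ ∈ (0,1/2) there exists C_δ > 0 such that (z(t) − z(s))/(t − s) ≥ (1 − C_δ·(t−s))·|z(s)|·|z(t)| whenever δ ≤ s < t ≤ 1−δ. For each s ∈ (0,1), let h_s be a CD(K₀,N) density on [0,1] with h_s(s) = 1. Assume that for Lebesgue-a.e. pair (t,s) ∈ (0,1)×(0,1): ρ(s)/ρ(t) = h_s(t)/(1 + (t−s)·z(t)). Then there exist functions L, Y : (0,1) → ℝ with 1/ρ(t) = L(t)·Y(t) for all t ∈ (0,1), where L is concave on (0,1) and Y is a CD(K₀,N) density on (0,1). -/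
/-- The distortion coefficients `σ^{(t)}_{K,𝒩}(θ)`, valued in `[0,∞]`
(the value is `+∞` when `K > 0` and `θ·√(K/𝒩) ≥ π`). -/
noncomputable def sigmaCoeff (K Np t θ : ℝ) : ENNReal :=
  if θ = 0 then ENNReal.ofReal t
  else if 0 < K then
    if θ * Real.sqrt (K / Np) < Real.pi then
      ENNReal.ofReal (Real.sin (t * (θ * Real.sqrt (K / Np))) / Real.sin (θ * Real.sqrt (K / Np)))
    else ⊤
  else if K = 0 then ENNReal.ofReal t
  else
    ENNReal.ofReal
      (Real.sinh (t * (θ * Real.sqrt (-K / Np))) / Real.sinh (θ * Real.sqrt (-K / Np)))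

/-- `h` is a `CD(K,N)` density on the (interval) `I ⊆ ℝ`: it is nonnegative on `I` and
`h(t·x₁+(1-t)·x₀)^{1/(N-1)} ≥ σ^{(t)}_{K,N-1}(|x₁-x₀|)·h(x₁)^{1/(N-1)}
  + σ^{(1-t)}_{K,N-1}(|x₁-x₀|)·h(x₀)^{1/(N-1)}` for all `x₀,x₁ ∈ I`, `t ∈ [0,1]`. -/
def IsCDDensity (K N : ℝ) (h : ℝ → ℝ) (I : Set ℝ) : Prop :=
  (∀ x ∈ I, 0 ≤ h x) ∧
  ∀ x₀ ∈ I, ∀ x₁ ∈ I, ∀ t ∈ Set.Icc (0:ℝ) 1,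
    sigmaCoeff K (N - 1) t |x₁ - x₀| * ENNReal.ofReal (h x₁ ^ (1 / (N - 1)))
        + sigmaCoeff K (N - 1) (1 - t) |x₁ - x₀| * ENNReal.ofReal (h x₀ ^ (1 / (N - 1)))
      ≤ ENNReal.ofReal (h (t * x₁ + (1 - t) * x₀) ^ (1 / (N - 1)))

/-!
The Riccati inequality `z' ≥ z²` says that `z = -L'/L` for a positive concave function `L`. The
tangent of `L` at `x`, evaluated at `s`, is `L x * (1 + (x - s) * z x)`, so with `Y = 1 / (ρ * L)`
the rigidity relation reads `h_s(x) = (Y x / Y s) * (tangent of L at x, evaluated at s) / L s`. By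
concavity `Y s * h_s ≥ Y`, with equality at `s`: thus `Y` is touched from above by a `CD(K₀,N)`
density at each point, and is therefore one itself, because at an intermediate point `s` the
defining inequality for `Y s * h_s` implies the one for `Y`.
-/

open Filter MeasureTheory Set Topology

lemma frequently_forall_add_mem_of_ae_restrict {E : Type*} [AddGroup E] [TopologicalSpace E]
    [IsTopologicalAddGroup E] [MeasurableSpace E] [BorelSpace E] {μ : Measure E}
    [μ.IsAddLeftInvariant] [μ.IsOpenPosMeasure] {U F : Set E} {P : E → Prop} (hU : IsOpen U)
    (hP : ∀ᵐ p ∂μ.restrict U, P p) (hF : F.Finite) (hFU : F ⊆ U) :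
    ∃ᶠ v in 𝓝 (0 : E), ∀ p ∈ F, p + v ∈ U ∧ P (p + v) := by
  rw [ae_restrict_iff' hU.measurableSet] at hP
  have hae : ∀ᵐ v ∂μ, ∀ p ∈ F, p + v ∈ U → P (p + v) := (ae_ball_iff hF.countable).2 fun p _ =>
    (measurePreserving_add_left μ p).quasiMeasurePreserving.ae hP
  have hnear : ∀ᶠ v in 𝓝 (0 : E), ∀ p ∈ F, p + v ∈ U := (eventually_all_finite hF).2 fun p hp =>
    (continuous_const_add p).continuousAt.eventually_mem (hU.mem_nhds (by simpa using hFU hp))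
  refine ((mem_closure_iff_frequently.1 (Measure.dense_of_ae hae 0)).and_eventually hnear).mono ?_
  exact fun v ⟨hPv, hUv⟩ p hp => ⟨hUv p hp, hPv p hp (hUv p hp)⟩

namespace IsCDDensity

variable {K N : ℝ} {I : Set ℝ}

lemma mono {J : Set ℝ} {g : ℝ → ℝ} (hg : IsCDDensity K N g J) (hIJ : I ⊆ J) :
    IsCDDensity K N g I :=
  ⟨fun x hx => hg.1 x (hIJ hx), fun x₀ hx₀ x₁ hx₁ => hg.2 x₀ (hIJ hx₀) x₁ (hIJ hx₁)⟩

lemma const_mul {g : ℝ → ℝ} (hI : Convex ℝ I) (hg : IsCDDensity K N g I) {c : ℝ} (hc : 0 ≤ c) :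
    IsCDDensity K N (fun x => c * g x) I := by
  refine ⟨fun x hx => mul_nonneg hc (hg.1 x hx), fun x₀ hx₀ x₁ hx₁ t ht => ?_⟩
  have ofReal_rpow (x : ℝ) (hx : x ∈ I) : ENNReal.ofReal ((c * g x) ^ (1 / (N - 1))) =
      ENNReal.ofReal (c ^ (1 / (N - 1))) * ENNReal.ofReal (g x ^ (1 / (N - 1))) := by
    rw [Real.mul_rpow hc (hg.1 x hx), ENNReal.ofReal_mul (Real.rpow_nonneg hc _)]
  have hmem : t * x₁ + (1 - t) * x₀ ∈ I := hI hx₁ hx₀ ht.1 (sub_nonneg.2 ht.2) (by ring)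
  rw [ofReal_rpow _ hx₀, ofReal_rpow _ hx₁, ofReal_rpow _ hmem, mul_left_comm,
    mul_left_comm (sigmaCoeff K (N - 1) (1 - t) |x₁ - x₀|), ← mul_add]
  gcongr
  exact hg.2 x₀ hx₀ x₁ hx₁ t ht

lemma of_forall_exists_le {f : ℝ → ℝ} (hN : 1 < N) (hI : Convex ℝ I) (hf : ∀ x ∈ I, 0 ≤ f x)
    (htouch : ∀ s ∈ I, ∃ g, IsCDDensity K N g I ∧ (∀ x ∈ I, f x ≤ g x) ∧ g s = f s) :
    IsCDDensity K N f I := by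
  refine ⟨hf, fun x₀ hx₀ x₁ hx₁ t ht => ?_⟩
  have hp : 0 ≤ 1 / (N - 1) := one_div_nonneg.2 (sub_pos.2 hN).le
  obtain ⟨g, hg, hfg, hgs⟩ :=
    htouch (t * x₁ + (1 - t) * x₀) (hI hx₁ hx₀ ht.1 (sub_nonneg.2 ht.2) (by ring))
  have ofReal_rpow_le (x : ℝ) (hx : x ∈ I) :
      ENNReal.ofReal (f x ^ (1 / (N - 1))) ≤ ENNReal.ofReal (g x ^ (1 / (N - 1))) :=
    ENNReal.ofReal_le_ofReal (Real.rpow_le_rpow (hf x hx) (hfg x hx) hp)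
  rw [← hgs]
  exact (add_le_add (mul_le_mul_right (ofReal_rpow_le x₁ hx₁) _)
    (mul_le_mul_right (ofReal_rpow_le x₀ hx₀) _)).trans (hg.2 x₀ hx₀ x₁ hx₁ t ht)

lemma of_ae_eq {h H : ℝ → ℝ → ℝ} (hI : Convex ℝ I) (hIo : IsOpen I)
    (hHc : ContinuousOn (fun p : ℝ × ℝ => H p.2 p.1) (I ×ˢ I))
    (hHpos : ∀ s ∈ I, ∀ x ∈ I, 0 < H s x) (hh : ∀ s ∈ I, IsCDDensity K N (h s) I)
    (hae : ∀ᵐ p ∂(volume : Measure (ℝ × ℝ)).restrict (I ×ˢ I), h p.2 p.1 = H p.2 p.1)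
    {s : ℝ} (hs : s ∈ I) : IsCDDensity K N (H s) I := by
  refine ⟨fun x hx => (hHpos s hs x hx).le, fun x₀ hx₀ x₁ hx₁ t ht => ?_⟩
  have hm : t * x₁ + (1 - t) * x₀ ∈ I := hI hx₁ hx₀ ht.1 (sub_nonneg.2 ht.2) (by ring)
  have rpow_pos (x : ℝ) (hx : x ∈ I) : 0 < H s x ^ (1 / (N - 1)) :=
    Real.rpow_pos_of_pos (hHpos s hs x hx) _
  have tendsto_shift (x : ℝ) (hx : x ∈ I) :
      Tendsto (fun v : ℝ × ℝ => ENNReal.ofReal (H (s + v.2) (x + v.1) ^ (1 / (N - 1)))) (𝓝 0)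
        (𝓝 (ENNReal.ofReal (H s x ^ (1 / (N - 1))))) := by
    have hadd : Tendsto (fun v : ℝ × ℝ => (x, s) + v) (𝓝 0) (𝓝 (x, s)) := by
      simpa using (continuous_const_add (x, s)).tendsto (0 : ℝ × ℝ)
    have hH := (hHc.continuousAt ((hIo.prod hIo).mem_nhds (mk_mem_prod hx hs))).tendsto.comp hadd
    exact ENNReal.tendsto_ofReal (hH.rpow_const (Or.inl (hHpos s hs x hx).ne'))
  have hfreq := frequently_forall_add_mem_of_ae_restrict (hIo.prod hIo) hae
    (F := {(x₀, s), (x₁, s), (t * x₁ + (1 - t) * x₀, s)}) (by simp)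
    (by simp [insert_subset_iff, hx₀, hx₁, hm, hs])
  -- the limits are nonzero, so multiplication by an infinite distortion coefficient is continuous
  refine le_of_tendsto_of_tendsto_of_frequently
    ((ENNReal.Tendsto.const_mul (tendsto_shift x₁ hx₁) (Or.inl ?_)).add
      (ENNReal.Tendsto.const_mul (tendsto_shift x₀ hx₀) (Or.inl ?_)))
    (tendsto_shift _ hm) (hfreq.mono fun v hv => ?_)
  · exact (ENNReal.ofReal_pos.2 (rpow_pos x₁ hx₁)).ne'
  · exact (ENNReal.ofReal_pos.2 (rpow_pos x₀ hx₀)).ne'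
  · simp only [mem_insert_iff, mem_singleton_iff, forall_eq_or_imp, forall_eq, mem_prod,
      Prod.fst_add, Prod.snd_add] at hv
    obtain ⟨⟨⟨hv₀, hvs⟩, heq₀⟩, ⟨⟨hv₁, -⟩, heq₁⟩, -, heqm⟩ := hv
    have hcd := (hh _ hvs).2 _ hv₀ _ hv₁ t ht
    have hmid : t * (x₁ + v.1) + (1 - t) * (x₀ + v.1) = t * x₁ + (1 - t) * x₀ + v.1 := by ring
    rwa [hmid, heq₀, heq₁, heqm, add_sub_add_right_eq_sub] at hcd

end IsCDDensity

lemma antitoneOn_of_frequently_slope_lt {I : Set ℝ} {f : ℝ → ℝ} (hI : I.OrdConnected)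
    (hf : ContinuousOn f I) (hslope : ∀ x ∈ I, ∀ r > 0, ∃ᶠ t in 𝓝[>] x, slope f x t < r) :
    AntitoneOn f I := fun a ha _ hb hab =>
  image_le_of_liminf_slope_right_le_deriv_boundary (hf.mono (hI.out ha hb)) le_rfl
    (B := fun _ => f a) continuousOn_const (fun x _ => hasDerivWithinAt_const x _ (f a))
    (fun x hx => hslope x (hI.out ha hb (Ico_subset_Icc_self hx))) (right_mem_Icc.2 hab)

lemma exists_hasDerivAt_of_continuousOn {I : Set ℝ} {z : ℝ → ℝ} (hI : I.OrdConnected)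
    (hIo : IsOpen I) (hz : ContinuousOn z I) : ∃ Z : ℝ → ℝ, ∀ t ∈ I, HasDerivAt Z (z t) t := by
  rcases I.eq_empty_or_nonempty with rfl | ⟨a, ha⟩
  · simp
  · exact ⟨fun t => ∫ x in a..t, z x, fun t ht => intervalIntegral.integral_hasDerivAt_right
      (hz.mono (hI.uIcc_subset ha ht)).intervalIntegrable
      (hz.stronglyMeasurableAtFilter hIo t ht) (hz.continuousAt (hIo.mem_nhds ht))⟩

lemma concaveOn_of_riccati {I : Set ℝ} {z L : ℝ → ℝ} (hI : Convex ℝ I) (hIo : IsOpen I)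
    (hz : ContinuousOn z I)
    (hriccati : ∀ x ∈ I, ∀ r < z x ^ 2, ∃ᶠ t in 𝓝[>] x, r < slope z x t)
    (hLpos : ∀ x ∈ I, 0 < L x) (hL : ∀ x ∈ I, HasDerivAt L (-(z x * L x)) x) :
    ConcaveOn ℝ I L := by
  have hLc : ContinuousOn L I := fun x hx => (hL x hx).continuousAt.continuousWithinAt
  suffices hanti : AntitoneOn (fun x => -(z x * L x)) I by
    refine AntitoneOn.concaveOn_of_deriv hI hLc ?_ ?_ <;> rw [hIo.interior_eq]
    · exact fun x hx => (hL x hx).differentiableAt.differentiableWithinAt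
    · exact hanti.congr fun x hx => (hL x hx).deriv.symm
  refine antitoneOn_of_frequently_slope_lt hI.ordConnected (hz.mul hLc).neg fun x hx r hr => ?_
  have slope_eq (t : ℝ) : slope (fun x => -(z x * L x)) x t =
      -(slope z x t * L t) - z x * slope L x t := by
    simp only [slope_def_field]; ring
  -- with `slope z x t` replaced by `c` slightly below `(z x) ^ 2`, the limit as `t → x` is `r / 2`
  set c := z x ^ 2 - r / (2 * L x) with hc
  have hLx := hLpos x hx
  have hlim : Tendsto (fun t => -(c * L t) - z x * slope L x t) (𝓝[>] x) (𝓝 (r / 2)) := by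
    have hLt : Tendsto L (𝓝[>] x) (𝓝 (L x)) :=
      (hL x hx).continuousAt.tendsto.mono_left nhdsWithin_le_nhds
    have hslopeL := (hasDerivWithinAt_iff_tendsto_slope' self_notMem_Ioi).1
      (hL x hx).hasDerivWithinAt
    convert (hLt.const_mul c).neg.sub (hslopeL.const_mul (z x)) using 2
    rw [hc]
    field_simp
    ring
  have hLev : ∀ᶠ t in 𝓝[>] x, 0 < L t :=
    nhdsWithin_le_nhds ((hIo.mem_nhds hx |> eventually_of_mem) hLpos)
  have hclt : c < z x ^ 2 := sub_lt_self _ (by positivity)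
  refine ((hriccati x hx c hclt).and_eventually
    (hLev.and (hlim.eventually_lt_const (half_lt_self hr)))).mono ?_
  rintro t ⟨hct, hLt, hlt⟩
  rw [slope_eq]
  linarith [mul_lt_mul_of_pos_right hct hLt]

lemma le_add_mul_sub_of_concaveOn {S : Set ℝ} {f : ℝ → ℝ} {f' x y : ℝ} (hf : ConcaveOn ℝ S f)
    (hx : x ∈ S) (hy : y ∈ S) (hf' : HasDerivAt f f' x) : f y ≤ f x + f' * (y - x) := by
  rcases lt_trichotomy x y with hxy | rfl | hxy
  · have hslope := hf.slope_le_of_hasDerivAt hx hy hxy hf'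
    rw [slope_def_field, div_le_iff₀ (sub_pos.2 hxy)] at hslope
    linarith
  · simp
  · have hslope := hf.le_slope_of_hasDerivAt hy hx hxy hf'
    rw [slope_def_field, le_div_iff₀ (sub_pos.2 hxy)] at hslope
    linarith

lemma exists_concaveOn_of_riccati {I : Set ℝ} {z : ℝ → ℝ} (hI : Convex ℝ I) (hIo : IsOpen I)
    (hz : ContinuousOn z I)
    (hriccati : ∀ x ∈ I, ∀ r < z x ^ 2, ∃ᶠ t in 𝓝[>] x, r < slope z x t) :
    ∃ L : ℝ → ℝ, ConcaveOn ℝ I L ∧ (∀ x, 0 < L x) ∧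
      ∀ s ∈ I, ∀ x ∈ I, L s / L x ≤ 1 + (x - s) * z x := by
  obtain ⟨Z, hZ⟩ := exists_hasDerivAt_of_continuousOn hI.ordConnected hIo hz
  set L : ℝ → ℝ := fun x => Real.exp (-Z x)
  have hpos (x : ℝ) : 0 < L x := Real.exp_pos _
  have hderiv (x : ℝ) (hx : x ∈ I) : HasDerivAt L (-(z x * L x)) x :=
    (hZ x hx).fun_neg.exp.congr_deriv (by ring)
  have hconcave := concaveOn_of_riccati hI hIo hz hriccati (fun x _ => hpos x) hderiv
  refine ⟨L, hconcave, hpos, fun s hs x hx => ?_⟩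
  rw [div_le_iff₀ (hpos x)]
  linarith [le_add_mul_sub_of_concaveOn hconcave hx hs (hderiv x hx)]

/-- The continuous representative, as a function of `x`, of the density `h_s` prescribed by the
rigidity relation `ρ(s)/ρ(x) = h_s(x)/(1 + (x-s)·z(x))`. -/
noncomputable def rigidDensity (ρ z : ℝ → ℝ) (s x : ℝ) : ℝ :=
  ρ s / ρ x * (1 + (x - s) * z x)

lemma continuousOn_rigidDensity {I : Set ℝ} {ρ z : ℝ → ℝ} (hρ : ContinuousOn ρ I)
    (hρ₀ : ∀ x ∈ I, ρ x ≠ 0) (hz : ContinuousOn z I) :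
    ContinuousOn (fun p : ℝ × ℝ => rigidDensity ρ z p.2 p.1) (I ×ˢ I) := by
  have hρ₁ := hρ.comp continuousOn_fst (mapsTo_fst_prod (s := I) (t := I))
  have hρ₂ := hρ.comp continuousOn_snd (mapsTo_snd_prod (s := I) (t := I))
  have hz₁ := hz.comp continuousOn_fst (mapsTo_fst_prod (s := I) (t := I))
  exact (hρ₂.div hρ₁ fun p hp => hρ₀ _ hp.1).mul
    (continuousOn_const.add ((continuousOn_fst.sub continuousOn_snd).mul hz₁))

lemma isCDDensity_rigidDensity {K N : ℝ} {I : Set ℝ} (hI : Convex ℝ I) (hIo : IsOpen I)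
    {ρ z : ℝ → ℝ} (hρpos : ∀ x ∈ I, 0 < ρ x) (hρ : ContinuousOn ρ I) (hz : ContinuousOn z I)
    (hden : ∀ s ∈ I, ∀ x ∈ I, 0 < 1 + (x - s) * z x)
    {h : ℝ → ℝ → ℝ} (hh : ∀ s ∈ I, IsCDDensity K N (h s) I)
    (hae : ∀ᵐ p ∂(volume : Measure (ℝ × ℝ)).restrict (I ×ˢ I),
      ρ p.2 / ρ p.1 = h p.2 p.1 / (1 + (p.1 - p.2) * z p.1))
    {s : ℝ} (hs : s ∈ I) : IsCDDensity K N (rigidDensity ρ z s) I := by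
  refine .of_ae_eq hI hIo (continuousOn_rigidDensity hρ (fun x hx => (hρpos x hx).ne') hz)
    (fun s hs x hx => mul_pos (div_pos (hρpos s hs) (hρpos x hx)) (hden s hs x hx)) hh ?_ hs
  filter_upwards [hae, ae_restrict_mem (hIo.prod hIo).measurableSet] with p hp hpI
  exact ((eq_div_iff (hden p.2 hpI.2 p.1 hpI.1).ne').1 hp).symm

lemma one_div_mul_le_mul_rigidDensity {ρ z L : ℝ → ℝ} {s x : ℝ} (hρs : 0 < ρ s) (hρx : 0 < ρ x)
    (hLs : 0 < L s) (htangent : L s / L x ≤ 1 + (x - s) * z x) :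
    1 / (ρ x * L x) ≤ 1 / (ρ s * L s) * rigidDensity ρ z s x :=
  calc 1 / (ρ x * L x) = 1 / (ρ s * L s) * (ρ s / ρ x * (L s / L x)) := by field_simp
    _ ≤ 1 / (ρ s * L s) * rigidDensity ρ z s x := by unfold rigidDensity; gcongr

lemma continuousOn_Ioo_of_lipschitzOnWith_Icc {a b : ℝ} {f : ℝ → ℝ}
    (hf : ∀ c d : ℝ, a < c → c ≤ d → d < b → ∃ C : NNReal, LipschitzOnWith C f (Icc c d)) :
    ContinuousOn f (Ioo a b) := fun x hx => by
  obtain ⟨c, hac, hcx⟩ := exists_between hx.1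
  obtain ⟨d, hxd, hdb⟩ := exists_between hx.2
  obtain ⟨C, hC⟩ := hf c d hac (hcx.trans hxd).le hdb
  exact (hC.continuousOn.continuousAt (Icc_mem_nhds hcx hxd)).continuousWithinAt

lemma eventually_lt_slope_of_third_order {z : ℝ → ℝ} {x C r : ℝ} (hz : ContinuousAt z x)
    (hslope : ∀ᶠ t in 𝓝[>] x, (1 - C * (t - x)) * (|z x| * |z t|) ≤ slope z x t)
    (hr : r < z x ^ 2) : ∀ᶠ t in 𝓝[>] x, r < slope z x t := by
  have hlim : ContinuousAt (fun t => (1 - C * (t - x)) * (|z x| * |z t|)) x := by fun_prop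
  have hlt : ∀ᶠ t in 𝓝 x, r < (1 - C * (t - x)) * (|z x| * |z t|) :=
    hlim.eventually_const_lt (by simpa [← sq] using hr)
  filter_upwards [hslope, nhdsWithin_le_nhds hlt] with t hle hlt using hlt.trans_le hle

lemma frequently_lt_slope_of_third_order {z : ℝ → ℝ} (hzc : ContinuousOn z (Ioo 0 1))
    (hz : ∀ δ : ℝ, 0 < δ → δ < 1 / 2 → ∃ C : ℝ, ∀ s t : ℝ, δ ≤ s → s < t → t ≤ 1 - δ →
      (z t - z s) / (t - s) ≥ (1 - C * (t - s)) * (|z s| * |z t|)) :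
    ∀ x ∈ Ioo (0 : ℝ) 1, ∀ r < z x ^ 2, ∃ᶠ t in 𝓝[>] x, r < slope z x t := by
  intro x hx r hr
  obtain ⟨δ, hδ, hδx⟩ := exists_between (lt_min hx.1 (sub_pos.2 hx.2))
  obtain ⟨hδx₀, hδx₁⟩ := lt_min_iff.1 hδx
  obtain ⟨C, hC⟩ := hz δ hδ (by linarith)
  refine (eventually_lt_slope_of_third_order (C := C) (hzc.continuousAt (Ioo_mem_nhds hx.1 hx.2))
    ?_ hr).frequently
  filter_upwards [Ioc_mem_nhdsGT (show x < 1 - δ by linarith)] with t ht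
  rw [slope_def_field]
  exact hC x t hδx₀.le ht.1 ht.2

theorem statement13_general {K N : ℝ} (hN : 1 < N) {I : Set ℝ} (hI : Convex ℝ I) (hIo : IsOpen I)
    {ρ z : ℝ → ℝ} (hρpos : ∀ t ∈ I, 0 < ρ t) (hρ : ContinuousOn ρ I) (hz : ContinuousOn z I)
    (hriccati : ∀ x ∈ I, ∀ r < z x ^ 2, ∃ᶠ t in 𝓝[>] x, r < slope z x t)
    {h : ℝ → ℝ → ℝ} (hh : ∀ s ∈ I, IsCDDensity K N (h s) I)
    (hae : ∀ᵐ p ∂(volume : Measure (ℝ × ℝ)).restrict (I ×ˢ I),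
      ρ p.2 / ρ p.1 = h p.2 p.1 / (1 + (p.1 - p.2) * z p.1)) :
    ∃ L Y : ℝ → ℝ, (∀ t ∈ I, 1 / ρ t = L t * Y t) ∧ ConcaveOn ℝ I L ∧ IsCDDensity K N Y I := by
  obtain ⟨L, hL, hLpos, htangent⟩ := exists_concaveOn_of_riccati hI hIo hz hriccati
  have hden (s : ℝ) (hs : s ∈ I) (x : ℝ) (hx : x ∈ I) : 0 < 1 + (x - s) * z x :=
    (div_pos (hLpos s) (hLpos x)).trans_le (htangent s hs x hx)
  have hYpos (t : ℝ) (ht : t ∈ I) : 0 < 1 / (ρ t * L t) :=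
    one_div_pos.2 (mul_pos (hρpos t ht) (hLpos t))
  refine ⟨L, fun t => 1 / (ρ t * L t), fun t _ => ?_, hL,
    .of_forall_exists_le hN hI (fun t ht => (hYpos t ht).le) fun s hs =>
      ⟨fun x => 1 / (ρ s * L s) * rigidDensity ρ z s x, ?_, fun x hx => ?_, ?_⟩⟩
  · have hLt := (hLpos t).ne'
    field_simp
  · exact (isCDDensity_rigidDensity hI hIo hρpos hρ hz hden hh hae hs).const_mul hI (hYpos s hs).le
  · exact one_div_mul_le_mul_rigidDensity (hρpos s hs) (hρpos x hx) (hLpos s) (htangent s hs x hx)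
  · simp [rigidDensity, (hρpos s hs).ne']

/-- Change-of-Variables Rigidity. Under the rigid a.e. change-of-variables relation
`ρ(s)/ρ(t) = h_s(t)/(1 + (t-s)·z(t))`, with `ρ` locally Lipschitz and positive, `z`
locally Lipschitz satisfying the third-order inequality, and each `h_s` a `CD(K₀,N)`
density on `[0,1]` with `h_s(s) = 1`, there is a factorization `1/ρ = L·Y` on `(0,1)`
with `L` concave and `Y` a `CD(K₀,N)` density on `(0,1)`. -/
theorem statement13 (K₀ N : ℝ) (hN : 1 < N)
    (ρ : ℝ → ℝ) (hρpos : ∀ t ∈ Set.Ioo (0:ℝ) 1, 0 < ρ t)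
    (hρlip : ∀ a b : ℝ, 0 < a → a ≤ b → b < 1 →
      ∃ C : NNReal, LipschitzOnWith C ρ (Set.Icc a b))
    (z : ℝ → ℝ)
    (hzlip : ∀ a b : ℝ, 0 < a → a ≤ b → b < 1 →
      ∃ C : NNReal, LipschitzOnWith C z (Set.Icc a b))
    (hz : ∀ δ : ℝ, 0 < δ → δ < 1 / 2 → ∃ C : ℝ, 0 < C ∧
      ∀ s t : ℝ, δ ≤ s → s < t → t ≤ 1 - δ →
        (z t - z s) / (t - s) ≥ (1 - C * (t - s)) * (|z s| * |z t|))
    (h : ℝ → ℝ → ℝ)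
    (hh : ∀ s ∈ Set.Ioo (0:ℝ) 1,
      IsCDDensity K₀ N (h s) (Set.Icc 0 1) ∧ h s s = 1)
    (hae : ∀ᵐ p ∂((MeasureTheory.volume : MeasureTheory.Measure (ℝ × ℝ)).restrict
        (Set.Ioo (0:ℝ) 1 ×ˢ Set.Ioo (0:ℝ) 1)),
      ρ p.2 / ρ p.1 = h p.2 p.1 / (1 + (p.1 - p.2) * z p.1)) :
    ∃ L Y : ℝ → ℝ,
      (∀ t ∈ Set.Ioo (0:ℝ) 1, 1 / ρ t = L t * Y t) ∧
      ConcaveOn ℝ (Set.Ioo (0:ℝ) 1) L ∧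
      IsCDDensity K₀ N Y (Set.Ioo 0 1) := by
  exact statement13_general hN (convex_Ioo 0 1) isOpen_Ioo hρpos
    (continuousOn_Ioo_of_lipschitzOnWith_Icc hρlip) (continuousOn_Ioo_of_lipschitzOnWith_Icc hzlip)
    (frequently_lt_slope_of_third_order (continuousOn_Ioo_of_lipschitzOnWith_Icc hzlip)
      fun δ hδ₀ hδ₁ => (hz δ hδ₀ hδ₁).imp fun _ => And.right)
    (fun s hs => (hh s hs).1.mono Ioo_subset_Icc_self) hae
end
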